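/- Short-time expansion of the heat semigroup recovers the Dirichlet energy: for every Schwartz function f : ℝ^d → ℝ, lim_{τ→0⁺} ( ‖K_{τ/2} * f‖²_{L²(ℝ^d)} - ‖f‖²_{L²(ℝ^d)} ) / τ = -‖∇f‖²_{L²(ℝ^d)}. -/

import Mathlib

open MeasureTheory Filter
open scoped Topology

/-- The heat kernel `K_t(x) = (4πt)^{-d/2} exp(-|x|²/(4t))` on `ℝ^d`. -/
noncomputable def heatKernel (d : ℕ) (t : ℝ) (x : EuclideanSpace ℝ (Fin d)) : ℝ :=
  (4 * Real.pi * t) ^ (-(d : ℝ) / 2) * Real.exp (-‖x‖ ^ 2 / (4 * t))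

/-- The heat semigroup `e^{tΔ} f = K_t * f` (convolution). -/
noncomputable def heatConv (d : ℕ) (t : ℝ) (u : EuclideanSpace ℝ (Fin d) → ℝ) :
    EuclideanSpace ℝ (Fin d) → ℝ :=
  fun x => ∫ y, heatKernel d t (x - y) * u y

/-!
Plancherel's theorem turns both sides into integrals against `w(ξ) = |𝓕 f(ξ)|²`. The heat
semigroup multiplies `𝓕 f` by a Gaussian, so that `‖K_{τ/2} * f‖² = ∫ exp(-τ a(ξ)) w(ξ) dξ` with
`a(ξ) = (2π|ξ|)²`, while `‖∇f‖² = ∫ a(ξ) w(ξ) dξ`. The limit is thus the right derivative at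
`τ = 0` of the Laplace-type integral `∫ exp(-τ a) w`, and `|exp(-τ a) - 1| ≤ τ a` allows
differentiation under the integral sign by dominated convergence.
-/

open scoped Real FourierTransform SchwartzMap LineDeriv Convolution

section LaplaceIntegral

lemma abs_exp_neg_sub_one_le {x : ℝ} (hx : 0 ≤ x) : |Real.exp (-x) - 1| ≤ x := by
  have h_le_one : Real.exp (-x) ≤ 1 := Real.exp_le_one_iff.mpr (neg_nonpos.mpr hx)
  rw [abs_of_nonpos (sub_nonpos.mpr h_le_one)]
  linarith [Real.one_sub_le_exp_neg x]

variable {F : Type*} [NormedAddCommGroup F] [NormedSpace ℝ F]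

lemma hasDerivAt_exp_neg_mul_smul_zero (a : ℝ) (w : F) :
    HasDerivAt (fun t : ℝ => Real.exp (-(t * a)) • w) (-(a • w)) 0 := by
  simpa using ((hasDerivAt_mul_const a (x := (0 : ℝ))).neg.exp).smul_const w

lemma norm_slope_exp_neg_mul_smul_le {a t : ℝ} (ha : 0 ≤ a) (ht : 0 < t) (w : F) :
    ‖slope (fun s : ℝ => Real.exp (-(s * a)) • w) 0 t‖ ≤ ‖a • w‖ :=
  calc ‖slope (fun s : ℝ => Real.exp (-(s * a)) • w) 0 t‖
      = t⁻¹ * (|Real.exp (-(t * a)) - 1| * ‖w‖) := by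
        have h_sub : Real.exp (-(t * a)) • w - w = (Real.exp (-(t * a)) - 1) • w := by
          rw [sub_smul, one_smul]
        simp [slope_def_module, h_sub, norm_smul, abs_of_pos ht]
    _ ≤ t⁻¹ * ((t * a) * ‖w‖) := by
        gcongr
        exact abs_exp_neg_sub_one_le (by positivity)
    _ = ‖a • w‖ := by
        rw [norm_smul, Real.norm_of_nonneg ha]
        field_simp

theorem hasDerivWithinAt_integral_exp_neg_mul_smul {α : Type*} [MeasurableSpace α]
    {μ : Measure α} {a : α → ℝ} {w : α → F} (ha_meas : AEStronglyMeasurable a μ)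
    (ha : 0 ≤ᵐ[μ] a) (hw : Integrable w μ) (haw : Integrable (fun x => a x • w x) μ) :
    HasDerivWithinAt (fun t : ℝ => ∫ x, Real.exp (-(t * a x)) • w x ∂μ)
      (-∫ x, a x • w x ∂μ) (Set.Ioi 0) 0 := by
  have h_meas (t : ℝ) : AEStronglyMeasurable (fun x => Real.exp (-(t * a x)) • w x) μ :=
    (Real.continuous_exp.comp_aestronglyMeasurable (ha_meas.const_mul t).neg).smul hw.1
  have h_int {t : ℝ} (ht : 0 ≤ t) : Integrable (fun x => Real.exp (-(t * a x)) • w x) μ := by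
    refine hw.mono (h_meas t) ?_
    filter_upwards [ha] with x (hx : 0 ≤ a x)
    rw [norm_smul, Real.norm_of_nonneg (Real.exp_pos _).le]
    exact mul_le_of_le_one_left (norm_nonneg _)
      (Real.exp_le_one_iff.mpr (neg_nonpos.mpr (mul_nonneg ht hx)))
  rw [hasDerivWithinAt_iff_tendsto_slope' Set.self_notMem_Ioi, ← integral_neg]
  have h_lim : Tendsto (fun t : ℝ => ∫ x, slope (fun s => Real.exp (-(s * a x)) • w x) 0 t ∂μ)
      (𝓝[>] 0) (𝓝 (∫ x, -(a x • w x) ∂μ)) := by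
    refine tendsto_integral_filter_of_dominated_convergence _ (.of_forall fun t => ?_) ?_
      haw.norm (.of_forall fun x => ?_)
    · exact ((h_meas t).sub (h_meas 0)).const_smul _
    · filter_upwards [self_mem_nhdsWithin] with t (ht : 0 < t)
      filter_upwards [ha] with x hx using norm_slope_exp_neg_mul_smul_le hx ht _
    · exact (hasDerivWithinAt_iff_tendsto_slope' Set.self_notMem_Ioi).mp
        (hasDerivAt_exp_neg_mul_smul_zero (a x) (w x)).hasDerivWithinAt
  refine h_lim.congr' ?_
  filter_upwards [self_mem_nhdsWithin] with t (ht : 0 < t)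
  simp only [slope_def_module]
  rw [integral_smul, integral_sub (h_int ht.le) (h_int le_rfl)]

end LaplaceIntegral

section Plancherel

variable {E H : Type*} [NormedAddCommGroup E] [InnerProductSpace ℝ E] [FiniteDimensional ℝ E]
  [MeasurableSpace E] [BorelSpace E] [NormedAddCommGroup H] [InnerProductSpace ℂ H]
  [CompleteSpace H]

theorem integral_norm_sq_fourier_of_continuous {u : E → H} (hu_cont : Continuous u)
    (hu : Integrable u) (hu_fourier : Integrable (𝓕 u)) :
    ∫ ξ, ‖𝓕 u ξ‖ ^ 2 = ∫ x, ‖u x‖ ^ 2 := by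
  have h_parseval : ∫ ξ, inner ℂ (𝓕 u ξ) (𝓕 u ξ) = ∫ x, inner ℂ (u x) (𝓕⁻ (𝓕 u) x) := by
    simpa only [flip_innerₗ, innerSL_apply_apply] using!
      VectorFourier.integral_sesq_fourierIntegral_eq_neg_flip (innerSL ℂ) (L := innerₗ E)
        Real.continuous_fourierChar continuous_inner hu hu_fourier
  rw [hu_cont.fourierInv_fourier_eq hu hu_fourier] at h_parseval
  simp only [inner_self_eq_norm_sq_to_K] at h_parseval
  exact_mod_cast h_parseval

end Plancherel

section Complexify

variable {E : Type*} [NormedAddCommGroup E] [NormedSpace ℝ E]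

/-- A real Schwartz function regarded as a complex one, which gives it a Fourier transform. -/
noncomputable def complexify (f : 𝓢(E, ℝ)) : 𝓢(E, ℂ) := f.postcompCLM Complex.ofRealCLM

lemma coe_complexify (f : 𝓢(E, ℝ)) : ⇑(complexify f) = fun x => (f x : ℂ) := rfl

lemma lineDeriv_complexify (f : 𝓢(E, ℝ)) (m : E) :
    ∂_{m} (complexify f) = complexify (∂_{m} f) := by
  ext x
  have h_deriv : HasFDerivAt (complexify f) (Complex.ofRealCLM.comp (fderiv ℝ f x)) x :=
    Complex.ofRealCLM.hasFDerivAt.comp x f.differentiableAt.hasFDerivAt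
  rw [SchwartzMap.lineDerivOp_apply_eq_fderiv, h_deriv.fderiv]
  rfl

end Complexify

section Gradient

lemma integrable_norm_pow_mul_norm_sq {E F : Type*} [NormedAddCommGroup E] [NormedSpace ℝ E]
    [MeasurableSpace E] [BorelSpace E] [SecondCountableTopology E] [NormedAddCommGroup F]
    [NormedSpace ℝ F] (μ : Measure E) [μ.HasTemperateGrowth] (g : 𝓢(E, F)) (k : ℕ) :
    Integrable (fun x => ‖x‖ ^ k * ‖g x‖ ^ 2) μ := by
  have h_bdd : ∀ᵐ x ∂μ, ‖‖g x‖‖ ≤ SchwartzMap.seminorm ℝ 0 0 g := .of_forall fun x => by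
    simpa using SchwartzMap.norm_le_seminorm ℝ g x
  refine ((g.integrable_pow_mul μ k).mul_bdd
    g.continuous.norm.aestronglyMeasurable h_bdd).congr (.of_forall fun x => ?_)
  ring

lemma norm_gradient_sq {E ι : Type*} [NormedAddCommGroup E] [InnerProductSpace ℝ E]
    [CompleteSpace E] [Fintype ι] (b : OrthonormalBasis ι ℝ E) (f : E → ℝ) (x : E) :
    ‖gradient f x‖ ^ 2 = ∑ i, fderiv ℝ f x (b i) ^ 2 := by
  rw [gradient, LinearIsometryEquiv.norm_map, b.norm_dual]

variable {E F : Type*} [NormedAddCommGroup E] [InnerProductSpace ℝ E] [FiniteDimensional ℝ E]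
  [MeasurableSpace E] [BorelSpace E] [NormedAddCommGroup F]

lemma norm_fourier_lineDeriv [NormedSpace ℂ F] (f : 𝓢(E, F)) (m ξ : E) :
    ‖𝓕 (∂_{m} f) ξ‖ = 2 * π * ‖inner ℝ ξ m‖ * ‖𝓕 f ξ‖ := by
  have h_growth : (fun ξ : E => inner ℝ ξ m).HasTemperateGrowth := by fun_prop
  rw [SchwartzMap.fourier_lineDerivOp_eq, smul_apply,
    SchwartzMap.smulLeftCLM_apply_apply h_growth]
  simp [norm_smul, abs_of_pos Real.pi_pos, mul_assoc]

theorem sum_integral_norm_sq_lineDeriv [InnerProductSpace ℂ F] [CompleteSpace F] {ι : Type*}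
    [Fintype ι] (b : OrthonormalBasis ι ℝ E) (f : 𝓢(E, F)) :
    ∑ i, ∫ x, ‖∂_{b i} f x‖ ^ 2 = ∫ ξ, (2 * π * ‖ξ‖) ^ 2 * ‖𝓕 f ξ‖ ^ 2 :=
  calc ∑ i, ∫ x, ‖∂_{b i} f x‖ ^ 2
      = ∑ i, ∫ ξ, ‖𝓕 (∂_{b i} f) ξ‖ ^ 2 := by simp only [SchwartzMap.integral_norm_sq_fourier]
    _ = ∫ ξ, ∑ i, ‖𝓕 (∂_{b i} f) ξ‖ ^ 2 :=
        (integral_finsetSum _ fun i _ => by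
          simpa using integrable_norm_pow_mul_norm_sq volume (𝓕 (∂_{b i} f)) 0).symm
    _ = ∫ ξ, (2 * π * ‖ξ‖) ^ 2 * ‖𝓕 f ξ‖ ^ 2 := by
        simp only [norm_fourier_lineDeriv, mul_pow, ← Finset.sum_mul, ← Finset.mul_sum,
          b.sum_sq_norm_inner_left]

theorem integral_norm_sq_gradient (f : 𝓢(E, ℝ)) :
    ∫ x, ‖gradient f x‖ ^ 2 = ∫ ξ, (2 * π * ‖ξ‖) ^ 2 * ‖𝓕 (complexify f) ξ‖ ^ 2 := by
  let b := stdOrthonormalBasis ℝ E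
  calc ∫ x, ‖gradient f x‖ ^ 2
      = ∫ x, ∑ i, ‖∂_{b i} (complexify f) x‖ ^ 2 := by
        simp only [norm_gradient_sq b, lineDeriv_complexify, coe_complexify,
          SchwartzMap.lineDerivOp_apply_eq_fderiv, Complex.norm_real, Real.norm_eq_abs, sq_abs]
    _ = ∑ i, ∫ x, ‖∂_{b i} (complexify f) x‖ ^ 2 :=
        integral_finsetSum _ fun i _ => by
          simpa using integrable_norm_pow_mul_norm_sq volume (∂_{b i} (complexify f)) 0
    _ = ∫ ξ, (2 * π * ‖ξ‖) ^ 2 * ‖𝓕 (complexify f) ξ‖ ^ 2 :=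
        sum_integral_norm_sq_lineDeriv b (complexify f)

end Gradient

section Heat

variable {d : ℕ} {t : ℝ}

lemma continuous_heatKernel (d : ℕ) (t : ℝ) : Continuous (heatKernel d t) := by
  unfold heatKernel
  fun_prop

lemma norm_heatKernel_le (ht : 0 ≤ t) (x : EuclideanSpace ℝ (Fin d)) :
    ‖heatKernel d t x‖ ≤ (4 * π * t) ^ (-(d : ℝ) / 2) := by
  rw [heatKernel, Real.norm_of_nonneg (by positivity)]
  refine mul_le_of_le_one_right (by positivity) (Real.exp_le_one_iff.mpr ?_)
  exact div_nonpos_of_nonpos_of_nonneg (by simp) (by positivity)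

lemma ofReal_heatKernel (t : ℝ) (x : EuclideanSpace ℝ (Fin d)) :
    (heatKernel d t x : ℂ) =
      ((4 * π * t) ^ (-(d : ℝ) / 2) : ℝ) * Complex.exp (-((4 * t)⁻¹ : ℝ) * ‖x‖ ^ 2) := by
  rw [heatKernel]
  push_cast
  congr 2
  ring

lemma integrable_ofReal_heatKernel (ht : 0 < t) :
    Integrable (fun x => (heatKernel d t x : ℂ)) := by
  have h_re : 0 < (((4 * t)⁻¹ : ℝ) : ℂ).re := by simpa using ht
  simp only [ofReal_heatKernel]
  simpa using (GaussianFourier.integrable_cexp_neg_mul_sq_norm_add h_re 0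
    (0 : EuclideanSpace ℝ (Fin d))).const_mul _

theorem fourier_heatKernel (ht : 0 < t) (ξ : EuclideanSpace ℝ (Fin d)) :
    𝓕 (fun x => (heatKernel d t x : ℂ)) ξ = Real.exp (-(t * (2 * π * ‖ξ‖) ^ 2)) := by
  have h_re : 0 < (((4 * t)⁻¹ : ℝ) : ℂ).re := by simpa using ht
  have h_norm : (π / ((4 * t)⁻¹ : ℝ) : ℂ) ^ (d / 2 : ℂ) = ((4 * π * t) ^ ((d : ℝ) / 2) : ℝ) := by
    rw [Complex.ofReal_cpow (by positivity)]
    push_cast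
    congr 1
    field_simp
  have h_exp : (-π ^ 2 * ‖ξ‖ ^ 2 / ((4 * t)⁻¹ : ℝ) : ℂ) = (-(t * (2 * π * ‖ξ‖) ^ 2) : ℝ) := by
    push_cast
    field_simp
    ring
  calc 𝓕 (fun x => (heatKernel d t x : ℂ)) ξ
      = ((4 * π * t) ^ (-(d : ℝ) / 2) : ℝ) *
          𝓕 (fun x : EuclideanSpace ℝ (Fin d) => Complex.exp (-((4 * t)⁻¹ : ℝ) * ‖x‖ ^ 2)) ξ := by
        simp only [ofReal_heatKernel, Real.fourier_eq, ← integral_const_mul, Circle.smul_def,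
          smul_eq_mul, mul_left_comm]
    _ = ((4 * π * t) ^ (-(d : ℝ) / 2) * (4 * π * t) ^ ((d : ℝ) / 2) : ℝ) *
          Real.exp (-(t * (2 * π * ‖ξ‖) ^ 2)) := by
        rw [fourier_gaussian_innerProductSpace h_re, finrank_euclideanSpace_fin, h_norm, h_exp]
        push_cast
        ring
    _ = Real.exp (-(t * (2 * π * ‖ξ‖) ^ 2)) := by
        rw [← Real.rpow_add (by positivity), neg_div, neg_add_cancel, Real.rpow_zero,
          Complex.ofReal_one, one_mul]

lemma integrable_fourier_heatKernel (ht : 0 < t) :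
    Integrable (𝓕 (fun x : EuclideanSpace ℝ (Fin d) => (heatKernel d t x : ℂ))) := by
  have h_re : 0 < ((t * (2 * π) ^ 2 : ℝ) : ℂ).re := by
    rw [Complex.ofReal_re]
    positivity
  rw [funext (fourier_heatKernel ht)]
  simpa [mul_pow, mul_assoc] using GaussianFourier.integrable_cexp_neg_mul_sq_norm_add h_re 0
    (0 : EuclideanSpace ℝ (Fin d))

lemma ofReal_heatConv (t : ℝ) (u : EuclideanSpace ℝ (Fin d) → ℝ) :
    (fun x => (heatConv d t u x : ℂ)) =
      (fun x => (heatKernel d t x : ℂ)) ⋆[ContinuousLinearMap.mul ℂ ℂ] (fun x => (u x : ℂ)) := by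
  ext x
  rw [convolution_mul_swap, heatConv, ← integral_complex_ofReal]
  simp only [Complex.ofReal_mul]

variable {u : EuclideanSpace ℝ (Fin d) → ℝ}

lemma continuous_ofReal_heatConv (ht : 0 < t) (hu : Integrable u) :
    Continuous (fun x => (heatConv d t u x : ℂ)) := by
  rw [ofReal_heatConv]
  refine BddAbove.continuous_convolution_left_of_integrable _
    ⟨(4 * π * t) ^ (-(d : ℝ) / 2), ?_⟩
    (Complex.continuous_ofReal.comp (continuous_heatKernel d t)) hu.ofReal
  rintro _ ⟨x, rfl⟩
  simpa using norm_heatKernel_le ht.le x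

lemma integrable_ofReal_heatConv (ht : 0 < t) (hu : Integrable u) :
    Integrable (fun x => (heatConv d t u x : ℂ)) := by
  rw [ofReal_heatConv]
  exact (integrable_ofReal_heatKernel ht).integrable_convolution _ hu.ofReal

theorem fourier_heatConv (ht : 0 < t) (hu : Integrable u) (ξ : EuclideanSpace ℝ (Fin d)) :
    𝓕 (fun x => (heatConv d t u x : ℂ)) ξ =
      𝓕 (fun x => (heatKernel d t x : ℂ)) ξ * 𝓕 (fun x => (u x : ℂ)) ξ := by
  rw [ofReal_heatConv]
  exact Real.fourier_mul_convolution_eq (integrable_ofReal_heatKernel ht) hu.ofReal ξ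

lemma integrable_fourier_heatConv (ht : 0 < t) (hu : Integrable u) :
    Integrable (𝓕 (fun x => (heatConv d t u x : ℂ))) := by
  have h_cont : Continuous (𝓕 (fun x => (u x : ℂ))) :=
    VectorFourier.fourierIntegral_continuous Real.continuous_fourierChar continuous_inner hu.ofReal
  have h_bdd (ξ) : ‖𝓕 (fun x => (u x : ℂ)) ξ‖ ≤ ∫ x, ‖(u x : ℂ)‖ :=
    VectorFourier.norm_fourierIntegral_le_integral_norm _ _ _ _ _
  rw [funext (fourier_heatConv ht hu)]
  exact (integrable_fourier_heatKernel ht).mul_bdd h_cont.aestronglyMeasurable (.of_forall h_bdd)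

theorem integral_sq_heatConv (ht : 0 < t) (hu : Integrable u) :
    ∫ x, heatConv d t u x ^ 2 =
      ∫ ξ, Real.exp (-(2 * t * (2 * π * ‖ξ‖) ^ 2)) * ‖𝓕 (fun x => (u x : ℂ)) ξ‖ ^ 2 :=
  calc ∫ x, heatConv d t u x ^ 2
      = ∫ x, ‖(heatConv d t u x : ℂ)‖ ^ 2 := by simp
    _ = ∫ ξ, ‖𝓕 (fun x => (heatConv d t u x : ℂ)) ξ‖ ^ 2 :=
        (integral_norm_sq_fourier_of_continuous (continuous_ofReal_heatConv ht hu)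
          (integrable_ofReal_heatConv ht hu) (integrable_fourier_heatConv ht hu)).symm
    _ = ∫ ξ, Real.exp (-(2 * t * (2 * π * ‖ξ‖) ^ 2)) * ‖𝓕 (fun x => (u x : ℂ)) ξ‖ ^ 2 := by
        congr with ξ
        rw [fourier_heatConv ht hu, fourier_heatKernel ht, norm_mul, mul_pow, Complex.norm_real,
          Real.norm_of_nonneg (Real.exp_pos _).le, ← Real.exp_nat_mul]
        congr 2
        push_cast
        ring

end Heat

/-- Short-time expansion of the heat semigroup recovers the Dirichlet energy: for every
Schwartz function `f : ℝ^d → ℝ`,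
`lim_{τ→0⁺} (‖K_{τ/2} * f‖²_{L²} - ‖f‖²_{L²})/τ = -‖∇f‖²_{L²}`. -/
theorem heat_short_time_dirichlet_energy (d : ℕ) (hd : 1 ≤ d)
    (f : SchwartzMap (EuclideanSpace ℝ (Fin d)) ℝ) :
    Tendsto (fun τ : ℝ =>
        ((∫ x, (heatConv d (τ / 2) (⇑f) x) ^ 2) - ∫ x, (f x) ^ 2) / τ)
      (𝓝[>] 0)
      (𝓝 (-∫ x, ‖gradient (⇑f) x‖ ^ 2)) := by
  let g := 𝓕 (complexify f)
  have h_weight : Integrable fun ξ => ‖g ξ‖ ^ 2 := by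
    simpa using integrable_norm_pow_mul_norm_sq volume g 0
  have h_energy : Integrable fun ξ => (2 * π * ‖ξ‖) ^ 2 * ‖g ξ‖ ^ 2 := by
    simpa only [mul_pow, mul_assoc] using
      ((integrable_norm_pow_mul_norm_sq volume g 2).const_mul (π ^ 2)).const_mul (2 ^ 2)
  have h_deriv := hasDerivWithinAt_integral_exp_neg_mul_smul
    (a := fun ξ => (2 * π * ‖ξ‖) ^ 2) (by fun_prop) (.of_forall fun ξ => by positivity)
    h_weight h_energy
  rw [hasDerivWithinAt_iff_tendsto_slope' Set.self_notMem_Ioi] at h_deriv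
  rw [integral_norm_sq_gradient]
  refine h_deriv.congr' ?_
  filter_upwards [self_mem_nhdsWithin] with τ (hτ : 0 < τ)
  have h_zero : ∫ x, f x ^ 2 = ∫ ξ, ‖g ξ‖ ^ 2 := by
    simp [g, SchwartzMap.integral_norm_sq_fourier, coe_complexify]
  rw [integral_sq_heatConv (half_pos hτ) f.integrable, h_zero, slope_def_field]
  simp [g, SchwartzMap.fourier_coe, coe_complexify, mul_div_cancel₀]
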